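/- Let C be a category with pullbacks which has Kähler differentials, and let X be a formally unramified object of C. Then Ω_X is a zero object of Ab(C/X); in particular Ω_X is isomorphic in Ab(C/X) to the trivial Beck module id_X: X → X. -/

import Mathlib

open CategoryTheory CategoryTheory.Limits

universe v u

/-- A Beck module over `Y`: an abelian group object in the overcategory `C/Y`,
presented by its underlying morphism `φ : M ⟶ Y`, a unit (zero) section `unit`,
an addition `add` over `Y`, and a negation `neg` over `Y`, satisfying the abelian
group axioms on generalized elements (equivalently, via Yoneda, making it an
abelian group object of `C/Y`). -/
structure BeckModule {C : Type u} [Category.{v} C] [HasPullbacks C] (Y : C) where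
  M : C
  φ : M ⟶ Y
  unit : Y ⟶ M
  unit_φ : unit ≫ φ = 𝟙 Y
  add : pullback φ φ ⟶ M
  add_φ : add ≫ φ = pullback.fst φ φ ≫ φ
  neg : M ⟶ M
  neg_φ : neg ≫ φ = φ
  add_assoc : ∀ {T : C} (a b c : T ⟶ M) (hab : a ≫ φ = b ≫ φ) (hbc : b ≫ φ = c ≫ φ),
    pullback.lift (pullback.lift a b hab ≫ add) c
        (by rw [Category.assoc, add_φ, ← Category.assoc, pullback.lift_fst, hab, hbc]) ≫ add =
      pullback.lift a (pullback.lift b c hbc ≫ add)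
        (by rw [Category.assoc, add_φ, ← Category.assoc, pullback.lift_fst, hab]) ≫ add
  add_comm : ∀ {T : C} (a b : T ⟶ M) (h : a ≫ φ = b ≫ φ),
    pullback.lift a b h ≫ add = pullback.lift b a h.symm ≫ add
  zero_add : ∀ {T : C} (a : T ⟶ M),
    pullback.lift (a ≫ φ ≫ unit) a
        (by rw [Category.assoc, Category.assoc, unit_φ, Category.comp_id]) ≫ add = a
  add_neg : ∀ {T : C} (a : T ⟶ M),
    pullback.lift a (a ≫ neg) (by rw [Category.assoc, neg_φ]) ≫ add = a ≫ φ ≫ unit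

/-- A Beck torsor structure on `γ : Z ⟶ Y`: `γ` is an effective epimorphism, equipped
with a Beck module `mod` over `Y` and a group action `τ : M ×_Y Z ⟶ Z` in `C/Y`
(satisfying the unit and associativity axioms for an action of the group object `M`),
such that the shear morphism `(τ, π_Z) : M ×_Y Z ⟶ Z ×_Y Z` is an isomorphism in `C/Y`. -/
structure BeckTorsor {C : Type u} [Category.{v} C] [HasPullbacks C] {Z Y : C} (γ : Z ⟶ Y) where
  mod : BeckModule Y
  effEpi : EffectiveEpi γ
  τ : pullback mod.φ γ ⟶ Z
  τ_γ : τ ≫ γ = pullback.snd mod.φ γ ≫ γ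
  act_unit : ∀ {T : C} (z : T ⟶ Z),
    pullback.lift (z ≫ γ ≫ mod.unit) z
        (by rw [Category.assoc, Category.assoc, mod.unit_φ, Category.comp_id]) ≫ τ = z
  act_assoc : ∀ {T : C} (a b : T ⟶ mod.M) (z : T ⟶ Z)
      (hab : a ≫ mod.φ = b ≫ mod.φ) (hbz : b ≫ mod.φ = z ≫ γ),
    pullback.lift (pullback.lift a b hab ≫ mod.add) z
        (by rw [Category.assoc, mod.add_φ, ← Category.assoc, pullback.lift_fst, hab, hbz]) ≫ τ =
      pullback.lift a (pullback.lift b z hbz ≫ τ)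
        (by rw [Category.assoc, τ_γ, ← Category.assoc, pullback.lift_snd, hab, hbz]) ≫ τ
  shear_iso : IsIso (pullback.lift τ (pullback.snd mod.φ γ) τ_γ :
    pullback mod.φ γ ⟶ pullback γ γ)

/-- An object `X` is formally unramified if, for every Beck torsor `γ : Z ⟶ Y` in `C`,
the canonical map `Hom(X, Z) → Hom(X, Y)` given by composition with `γ` is injective. -/
def FormallyUnramified {C : Type u} [Category.{v} C] [HasPullbacks C] (X : C) : Prop :=
  ∀ ⦃Z Y : C⦄ (γ : Z ⟶ Y), BeckTorsor γ →
    Function.Injective (fun ψ : X ⟶ Z => ψ ≫ γ)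

/-- A morphism of Beck modules over `Y`: a morphism over `Y` commuting with the
addition (i.e. a morphism of abelian group objects in `C/Y`). -/
@[ext]
structure BeckModuleHom {C : Type u} [Category.{v} C] [HasPullbacks C] {Y : C}
    (N₁ N₂ : BeckModule Y) where
  f : N₁.M ⟶ N₂.M
  w : f ≫ N₂.φ = N₁.φ
  map_add : ∀ {T : C} (a b : T ⟶ N₁.M) (h : a ≫ N₁.φ = b ≫ N₁.φ),
    (pullback.lift a b h ≫ N₁.add) ≫ f =
      pullback.lift (a ≫ f) (b ≫ f)
        (by rw [Category.assoc, Category.assoc, w, h]) ≫ N₂.add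

/-- The category `Ab(C/Y)` of Beck modules over `Y`. -/
instance BeckModule.category {C : Type u} [Category.{v} C] [HasPullbacks C] (Y : C) :
    Category (BeckModule Y) where
  Hom := BeckModuleHom
  id N := ⟨𝟙 N.M, Category.id_comp _, by intro T a b h; simp⟩
  comp {N₁ N₂ N₃} f g := ⟨f.f ≫ g.f, by rw [Category.assoc, g.w, f.w], by
    intro T a b h
    rw [← Category.assoc, f.map_add, g.map_add]
    simp⟩
  id_comp f := by apply BeckModuleHom.ext; simp
  comp_id f := by apply BeckModuleHom.ext; simp
  assoc f g h := by apply BeckModuleHom.ext; simp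

/-- The forgetful functor `Ab(C/Y) ⥤ C/Y`. -/
def forgetBeck {C : Type u} [Category.{v} C] [HasPullbacks C] (Y : C) :
    BeckModule Y ⥤ Over Y where
  obj N := Over.mk N.φ
  map {N₁ N₂} f := Over.homMk f.f f.w
  map_id N := by ext; simp; rfl
  map_comp f g := by ext; simp; rfl

/-- The identity morphism `𝟙 X`, equipped with its unique structure of an abelian
group object in `C/X` (the trivial Beck module over `X`). -/
noncomputable def idBeckModule {C : Type u} [Category.{v} C] [HasPullbacks C] (X : C) : BeckModule X where
  M := X
  φ := 𝟙 X
  unit := 𝟙 X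
  unit_φ := by simp
  add := pullback.fst (𝟙 X) (𝟙 X)
  add_φ := by simp
  neg := 𝟙 X
  neg_φ := by simp
  add_assoc := by
    intros
    exact (pullback.lift_fst _ _ _).trans
      ((pullback.lift_fst _ _ _).trans (pullback.lift_fst _ _ _).symm)
  add_comm := by
    intro T a b h
    simp only [pullback.lift_fst]
    simpa using h
  zero_add := by
    intro T a
    have h : a ≫ 𝟙 X ≫ 𝟙 X = a := by simp
    exact (pullback.lift_fst _ _ _).trans h
  add_neg := by
    intro T a
    have h : a = a ≫ 𝟙 X ≫ 𝟙 X := by simp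
    exact (pullback.lift_fst _ _ _).trans h

/-! A Beck module `N` over `X` is a torsor under itself, since subtraction inverts the shear
morphism. If `X` is formally unramified, two sections of `N` therefore agree, being lifts of `𝟙 X`
along this torsor. By adjunction, morphisms `Ω_X ⟶ N` are the same thing as sections of `N`, so
there is at most one for each `N`. Hence the endomorphism of `Ω_X` that factors through the trivial
Beck module, a zero object, is the identity. -/

namespace BeckModule

variable {C : Type u} [Category.{v} C] [HasPullbacks C] {Y : C}

/-- The generalized elements of a Beck module `N` over `Y` lying over `y : T ⟶ Y`, i.e. the
morphisms from `y` to `N` in `C/Y`. They form an abelian group, which turns computations in `N`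
into ordinary group theory. -/
def Point (N : BeckModule Y) {T : C} (y : T ⟶ Y) : Type v :=
  {a : T ⟶ N.M // a ≫ N.φ = y}

namespace Point

variable {N : BeckModule Y} {T : C} {y : T ⟶ Y}

/-- The morphism `(a, b) : T ⟶ M ×_Y M` given by two generalized elements over the same `y`. -/
noncomputable def pair (a b : N.Point y) : T ⟶ pullback N.φ N.φ :=
  pullback.lift a.1 b.1 (a.2.trans b.2.symm)

theorem pair_fst (a b : N.Point y) : pair a b ≫ pullback.fst N.φ N.φ = a.1 :=
  pullback.lift_fst _ _ _

theorem pair_snd (a b : N.Point y) : pair a b ≫ pullback.snd N.φ N.φ = b.1 :=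
  pullback.lift_snd _ _ _

theorem exists_eq_pair (p : T ⟶ pullback N.φ N.φ) :
    ∃ (y : T ⟶ Y) (a b : N.Point y), p = pair a b :=
  let a : N.Point (p ≫ pullback.snd N.φ N.φ ≫ N.φ) :=
    ⟨p ≫ pullback.fst N.φ N.φ, by rw [Category.assoc, pullback.condition]⟩
  let b : N.Point (p ≫ pullback.snd N.φ N.φ ≫ N.φ) :=
    ⟨p ≫ pullback.snd N.φ N.φ, Category.assoc _ _ _⟩
  ⟨_, a, b, pullback.hom_ext (pair_fst a b).symm (pair_snd a b).symm⟩

noncomputable instance : Add (N.Point y) where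
  add a b := ⟨pair a b ≫ N.add, by
    rw [Category.assoc, N.add_φ, ← Category.assoc, pair_fst, a.2]⟩

instance : Zero (N.Point y) where
  zero := ⟨y ≫ N.unit, by rw [Category.assoc, N.unit_φ, Category.comp_id]⟩

instance : Neg (N.Point y) where
  neg a := ⟨a.1 ≫ N.neg, by rw [Category.assoc, N.neg_φ, a.2]⟩

protected theorem zero_add (a : N.Point y) : 0 + a = a := by
  obtain ⟨a, rfl⟩ := a
  have zero_eq : (0 : N.Point (a ≫ N.φ)) = ⟨a ≫ N.φ ≫ N.unit, by simp [N.unit_φ]⟩ :=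
    Subtype.ext (Category.assoc _ _ _)
  rw [zero_eq]
  exact Subtype.ext (N.zero_add a)

protected theorem add_comm (a b : N.Point y) : a + b = b + a :=
  Subtype.ext (N.add_comm a.1 b.1 _)

protected theorem neg_add_cancel (a : N.Point y) : -a + a = 0 := by
  rw [Point.add_comm]
  obtain ⟨a, rfl⟩ := a
  exact Subtype.ext ((N.add_neg a).trans (Category.assoc _ _ _).symm)

noncomputable instance : AddCommGroup (N.Point y) where
  add_assoc a b c := Subtype.ext (N.add_assoc a.1 b.1 c.1 _ _)
  zero_add := Point.zero_add
  add_zero a := (Point.add_comm a 0).trans (Point.zero_add a)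
  add_comm := Point.add_comm
  neg_add_cancel := Point.neg_add_cancel
  nsmul := nsmulRec
  zsmul := zsmulRec

end Point

variable (N : BeckModule Y)

theorem add_φ_eq_snd : N.add ≫ N.φ = pullback.snd N.φ N.φ ≫ N.φ :=
  N.add_φ.trans pullback.condition

/-- The shear morphism `(a, b) ↦ (a + b, b)` of a Beck module. -/
noncomputable def shear : pullback N.φ N.φ ⟶ pullback N.φ N.φ :=
  pullback.lift N.add (pullback.snd N.φ N.φ) N.add_φ_eq_snd

variable {N} in
theorem pair_comp_shear {T : C} {y : T ⟶ Y} (a b : N.Point y) :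
    a.pair b ≫ N.shear = (a + b).pair b := by
  apply pullback.hom_ext
  · rw [Category.assoc, shear, pullback.lift_fst, Point.pair_fst]
    rfl
  · rw [Category.assoc, shear, pullback.lift_snd, Point.pair_snd, Point.pair_snd]

instance mono_shear : Mono N.shear where
  right_cancellation p q hpq := by
    obtain ⟨y, a, b, rfl⟩ := Point.exists_eq_pair p
    obtain ⟨y', a', b', rfl⟩ := Point.exists_eq_pair q
    rw [pair_comp_shear, pair_comp_shear] at hpq
    have snd_eq : b.1 = b'.1 := by
      simpa only [Point.pair_snd] using congrArg (· ≫ pullback.snd N.φ N.φ) hpq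
    have sum_eq : (a + b).1 = (a' + b').1 := by
      simpa only [Point.pair_fst] using congrArg (· ≫ pullback.fst N.φ N.φ) hpq
    obtain rfl : y = y' := by rw [← b.2, ← b'.2, snd_eq]
    obtain rfl : b = b' := Subtype.ext snd_eq
    obtain rfl : a = a' := add_right_cancel (Subtype.ext sum_eq)
    rfl

instance isIso_shear : IsIso N.shear := by
  refine isIso_of_yoneda_map_bijective _ fun T => ⟨fun p q => (cancel_mono N.shear).1, fun q => ?_⟩
  obtain ⟨y, c, b, rfl⟩ := Point.exists_eq_pair q
  exact ⟨(c - b).pair b, (pair_comp_shear _ _).trans (by rw [sub_add_cancel])⟩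

/-- A Beck module, seen as a torsor under itself acting by translations. -/
noncomputable def selfTorsor : BeckTorsor N.φ where
  mod := N
  effEpi :=
    have : IsSplitEpi N.φ := IsSplitEpi.mk' ⟨N.unit, N.unit_φ⟩
    inferInstance
  τ := N.add
  τ_γ := N.add_φ_eq_snd
  act_unit := N.zero_add
  act_assoc := N.add_assoc
  shear_iso := N.isIso_shear

variable {N} {N' : BeckModule Y}

/-- The action of a morphism of Beck modules on generalized elements. -/
noncomputable def mapPoint (f : BeckModuleHom N N') {T : C} (y : T ⟶ Y) :
    N.Point y →+ N'.Point y :=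
  AddMonoidHom.mk' (fun a => ⟨a.1 ≫ f.f, by rw [Category.assoc, f.w, a.2]⟩)
    fun a b => Subtype.ext (f.map_add a.1 b.1 _)

theorem unit_comp_hom (f : BeckModuleHom N N') : N.unit ≫ f.f = N'.unit := by
  have map_zero_val : (𝟙 Y ≫ N.unit) ≫ f.f = 𝟙 Y ≫ N'.unit :=
    congrArg Subtype.val (map_zero (mapPoint f (𝟙 Y)))
  simpa only [Category.id_comp] using map_zero_val

variable (N)

/-- The zero morphism out of the trivial Beck module. -/
noncomputable def fromId : BeckModuleHom (idBeckModule Y) N where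
  f := N.unit
  w := N.unit_φ
  map_add {T} (a b : T ⟶ Y) (h : a ≫ 𝟙 Y = b ≫ 𝟙 Y) := by
    obtain rfl : a = b := (cancel_mono (𝟙 Y)).1 h
    have zero_add_zero : (0 : N.Point a) + 0 = 0 := add_zero 0
    exact (congrArg (· ≫ N.unit) (pullback.lift_fst _ _ _)).trans
      (congrArg Subtype.val zero_add_zero).symm

/-- The zero morphism into the trivial Beck module. -/
noncomputable def toId : BeckModuleHom N (idBeckModule Y) where
  f := N.φ
  w := Category.comp_id _
  map_add a b h :=
    have add_over : (pullback.lift a b h ≫ N.add) ≫ N.φ = a ≫ N.φ := by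
      rw [Category.assoc, N.add_φ, pullback.lift_fst_assoc]
    add_over.trans (pullback.lift_fst _ _ _).symm

theorem isZero_idBeckModule (Y : C) : IsZero (idBeckModule Y) where
  unique_to N := ⟨⟨⟨N.fromId⟩, fun f => BeckModuleHom.ext
    ((Category.id_comp _).symm.trans (unit_comp_hom f))⟩⟩
  unique_from N := ⟨⟨⟨N.toId⟩, fun f => BeckModuleHom.ext
    ((Category.comp_id _).symm.trans (BeckModuleHom.w f))⟩⟩

/-- For `Ω = F` left adjoint to the forgetful functor, morphisms from `Ω(y)` to `N` are generalized
elements of `N` over `y`, i.e. derivations along `y` with values in `N`. -/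
def kaehlerHomEquiv {F : Over Y ⥤ BeckModule Y} (adj : F ⊣ forgetBeck Y) {T : C} (y : T ⟶ Y) :
    (F.obj (Over.mk y) ⟶ N) ≃ N.Point y :=
  (adj.homEquiv (Over.mk y) N).trans
    { toFun := fun f => ⟨f.left, Over.w f⟩
      invFun := fun a => Over.homMk a.1 a.2
      left_inv := fun _ => rfl
      right_inv := fun _ => rfl }

end BeckModule

section FormallyUnramified

variable {C : Type u} [Category.{v} C] [HasPullbacks C] {X : C}

theorem FormallyUnramified.subsingleton_point (hX : FormallyUnramified X) {Y : C}
    (N : BeckModule Y) (y : X ⟶ Y) : Subsingleton (N.Point y) where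
  allEq s t := Subtype.ext (hX N.φ N.selfTorsor (s.2.trans t.2.symm))

theorem FormallyUnramified.subsingleton_kaehler_hom (hX : FormallyUnramified X) {Y : C}
    {F : Over Y ⥤ BeckModule Y} (adj : F ⊣ forgetBeck Y) (y : X ⟶ Y) (N : BeckModule Y) :
    Subsingleton (F.obj (Over.mk y) ⟶ N) :=
  have := hX.subsingleton_point N y
  (N.kaehlerHomEquiv adj y).subsingleton

theorem isZero_kaehler_of_formallyUnramified_general {Y : C} {F : Over Y ⥤ BeckModule Y}
    (adj : F ⊣ forgetBeck Y) (y : X ⟶ Y) (hX : FormallyUnramified X) :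
    IsZero (F.obj (Over.mk y)) ∧ Nonempty (F.obj (Over.mk y) ≅ idBeckModule Y) := by
  have hId : IsZero (idBeckModule Y) := BeckModule.isZero_idBeckModule Y
  have := hX.subsingleton_kaehler_hom adj y
  let e : F.obj (Over.mk y) ≅ idBeckModule Y :=
    { hom := hId.from_ _
      inv := hId.to_ _
      hom_inv_id := Subsingleton.elim _ _
      inv_hom_id := hId.eq_of_src _ _ }
  exact ⟨hId.of_iso e, ⟨e⟩⟩

end FormallyUnramified

/-- If `C` has Kähler differentials and `X` is formally unramified, then
`Ω_X = Ω(𝟙 X)` is a zero object of `Ab(C/X)`; in particular `Ω_X` is isomorphic in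
`Ab(C/X)` to the trivial Beck module `𝟙 X : X ⟶ X`. -/
theorem isZero_kaehler_of_formallyUnramified {C : Type u} [Category.{v} C]
    [HasPullbacks C] (Ω : ∀ Y : C, Over Y ⥤ BeckModule Y)
    (adj : ∀ Y : C, Ω Y ⊣ forgetBeck Y) (X : C) (hX : FormallyUnramified X) :
    IsZero ((Ω X).obj (Over.mk (𝟙 X))) ∧
      Nonempty ((Ω X).obj (Over.mk (𝟙 X)) ≅ idBeckModule X) :=
  isZero_kaehler_of_formallyUnramified_general (adj X) (𝟙 X) hX
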